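/- arXiv:1310.2858 — 2 statements merged into one kernel-verified Lean document; each statement's English description precedes it below -/
import Mathlib

section
/- Let c̄ be a k-cd for n nodes (n ≥ 1), let m ∈ M(c̄), and let ℓ ∈ [k] ∖ {m} be such that c_ℓ = max_{h∈[k]∖{m}} c_h. If M(c̄) = {m}, then μ_ℓ(c̄) = c_ℓ·(1 + γ(c̄) + α(c̄) − s(c̄)/n). -/
open Finset

/-- The color appearing at least twice among `x, y, z`, or `x` if all three are distinct. -/
def maj3 {k : ℕ} (x y z : Fin k) : Fin k := if y = z then y else x

/-- Number of nodes with color `j` in the assignment `a`. -/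
def cnt {n k : ℕ} (a : Fin n → Fin k) (j : Fin k) : ℕ :=
  (Finset.univ.filter (fun i => a i = j)).card

/-- One sample for a round of the 3-majority dynamics: each node picks three nodes
(uniformly at random, with replacement). -/
abbrev Sample (n : ℕ) := Fin n → Fin n × Fin n × Fin n

/-- The assignment obtained from `a` after one step of the 3-majority dynamics with samples `S`. -/
def stepA {n k : ℕ} (a : Fin n → Fin k) (S : Sample n) : Fin n → Fin k :=
  fun i => maj3 (a (S i).1) (a (S i).2.1) (a (S i).2.2)

/-- Probability that the event `E` holds for the configuration obtained from `a`
after one step of the 3-majority dynamics (samples are uniform and independent). -/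
noncomputable def stepPr {n k : ℕ} (a : Fin n → Fin k) (E : (Fin n → Fin k) → Prop) : ℝ :=
  (Nat.card {S : Sample n // E (stepA a S)} : ℝ) / (Nat.card (Sample n) : ℝ)

/-- Expectation of `f` of the configuration obtained from `a` after one step of the
3-majority dynamics. -/
noncomputable def stepE {n k : ℕ} (a : Fin n → Fin k) (f : (Fin n → Fin k) → ℝ) : ℝ :=
  (∑ S : Sample n, f (stepA a S)) / (Nat.card (Sample n) : ℝ)

/-- `m(c̄)`: the size of the largest color class. -/
def mval {k : ℕ} (c : Fin k → ℕ) : ℕ := Finset.univ.sup c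

/-- `M(c̄)`: the set of colors attaining the maximum. -/
def Mset {k : ℕ} (c : Fin k → ℕ) : Finset (Fin k) :=
  Finset.univ.filter (fun j => c j = mval c)

/-- `s(c̄)`: the bias, i.e. the gap between the (unique) maximum and the second largest
color class; `0` if the maximum is not unique. -/
def sval {k : ℕ} (c : Fin k → ℕ) : ℕ :=
  if (Mset c).card = 1 then mval c - (Finset.univ \ Mset c).sup c else 0

/-- `α(c̄) = (n − m(c̄))·s(c̄)/n²`. -/
noncomputable def alphaV (n : ℕ) {k : ℕ} (c : Fin k → ℕ) : ℝ :=
  ((n : ℝ) - mval c) * sval c / (n : ℝ) ^ 2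

/-- `γ(c̄) = (n·m(c̄) − Σ_h c_h²)/n² − α(c̄)`. -/
noncomputable def gammaV (n : ℕ) {k : ℕ} (c : Fin k → ℕ) : ℝ :=
  ((n : ℝ) * mval c - ∑ h, (c h : ℝ) ^ 2) / (n : ℝ) ^ 2 - alphaV n c

/-- The trajectory of the 3-majority dynamics started at `a`, driven by the samples `S`
for the first `N` rounds. -/
def trajA {n k N : ℕ} (a : Fin n → Fin k) (S : Fin N → Sample n) : ℕ → Fin n → Fin k
  | 0 => a
  | t + 1 => if h : t < N then stepA (trajA a S t) (S ⟨t, h⟩) else trajA a S t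

/-- Probability of an event `E` for an `N`-round run of the 3-majority dynamics
(all samples of all rounds are uniform and independent). -/
noncomputable def runPr {n k : ℕ} (N : ℕ) (a : Fin n → Fin k)
    (E : (Fin N → Sample n) → Prop) : ℝ :=
  (Nat.card {S : Fin N → Sample n // E S} : ℝ) / (Nat.card (Fin N → Sample n) : ℝ)

lemma aux_cnt_sum {n k : ℕ} (a : Fin n → Fin k) (j : Fin k) :
    (∑ x : Fin n, if a x = j then (1 : ℝ) else 0) = cnt a j := by
  simp [cnt]

lemma aux_pair {n k : ℕ} (a : Fin n → Fin k) :
    (∑ y : Fin n, ∑ z : Fin n, if a y = a z then (1 : ℝ) else 0) =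
      ∑ h, (cnt a h : ℝ) ^ 2 := by
  have h1 : ∀ y z : Fin n, (if a y = a z then (1 : ℝ) else 0) =
      ∑ h, (if a y = h then (1 : ℝ) else 0) * (if a z = h then (1 : ℝ) else 0) := by
    intro y z
    simp [eq_comm]
  simp_rw [h1]
  have h2 : ∀ h, (cnt a h : ℝ) ^ 2 = ∑ y : Fin n, ∑ z : Fin n,
      (if a y = h then (1 : ℝ) else 0) * (if a z = h then (1 : ℝ) else 0) := by
    intro h
    rw [← aux_cnt_sum, sq, Finset.sum_mul_sum]
  simp_rw [h2]
  refine Eq.trans ?_ Finset.sum_comm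
  refine Finset.sum_congr rfl fun y _ => ?_
  exact Finset.sum_comm

lemma aux_triple {n k : ℕ} (a : Fin n → Fin k) (j : Fin k) :
    (∑ t : Fin n × Fin n × Fin n,
      if maj3 (a t.1) (a t.2.1) (a t.2.2) = j then (1 : ℝ) else 0) =
    n * (cnt a j : ℝ) ^ 2 + cnt a j * ((n : ℝ) ^ 2 - ∑ h, (cnt a h : ℝ) ^ 2) := by
  have h1 : ∀ x y z : Fin n,
      (if maj3 (a x) (a y) (a z) = j then (1 : ℝ) else 0) =
      (if a y = j then (1 : ℝ) else 0) * (if a z = j then (1 : ℝ) else 0) +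
      (if a x = j then (1 : ℝ) else 0) * (1 - if a y = a z then (1 : ℝ) else 0) := by
    intro x y z
    unfold maj3
    by_cases h : a y = a z
    · simp [h]
    · by_cases h2 : a y = j
      · have : a z ≠ j := fun h3 => h (h2.trans h3.symm)
        simp [h, this]
      · simp [h, h2]
  simp_rw [Fintype.sum_prod_type, h1, Finset.sum_add_distrib, ← Finset.mul_sum,
    Finset.sum_sub_distrib, aux_pair, ← Finset.sum_mul, aux_cnt_sum]
  simp
  ring

/-- Lemma (3maj-max-expected), part (c): if `M(c̄) = {m}` and `ℓ ≠ m` attains the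
second-largest color class, then `μ_ℓ(c̄) = c_ℓ·(1 + γ(c̄) + α(c̄) − s(c̄)/n)`. -/
theorem mu_second_eq (n k : ℕ) (hn : 1 ≤ n) (c : Fin k → ℕ) (hc : ∑ h, c h = n)
    (a : Fin n → Fin k) (ha : ∀ h, cnt a h = c h) (m ℓ : Fin k) (hm : m ∈ Mset c)
    (hℓm : ℓ ≠ m) (hℓ : c ℓ = (Finset.univ.erase m).sup c) (hM : Mset c = {m}) :
    stepE a (fun b => (cnt b ℓ : ℝ)) =
      (c ℓ : ℝ) * (1 + gammaV n c + alphaV n c - (sval c : ℝ) / (n : ℝ)) := by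
  have hn0 : (n : ℝ) ≠ 0 := by positivity
  have hs : (sval c : ℝ) = mval c - c ℓ := by
    have hle : c ℓ ≤ mval c := Finset.le_sup (f := c) (Finset.mem_univ ℓ)
    have : sval c = mval c - c ℓ := by
      unfold sval
      rw [hM, Finset.card_singleton, if_pos rfl, hℓ, Finset.sdiff_singleton_eq_erase]
    rw [this, Nat.cast_sub hle]
  have key : (∑ S : Sample n, (cnt (stepA a S) ℓ : ℝ)) =
      n * (((n : ℝ) ^ 3) ^ (n - 1) * ∑ t : Fin n × Fin n × Fin n,
      if maj3 (a t.1) (a t.2.1) (a t.2.2) = ℓ then (1 : ℝ) else 0) := by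
    simp_rw [← aux_cnt_sum]
    rw [Finset.sum_comm]
    have : ∀ i : Fin n, (∑ S : Sample n, if stepA a S i = ℓ then (1 : ℝ) else 0) =
        ((n : ℝ) ^ 3) ^ (n - 1) * ∑ t : Fin n × Fin n × Fin n,
      if maj3 (a t.1) (a t.2.1) (a t.2.2) = ℓ then (1 : ℝ) else 0 := by
      intro i
      have := Fintype.sum_piFinset_apply (ι := Fin n)
        (fun t : Fin n × Fin n × Fin n =>
          if maj3 (a t.1) (a t.2.1) (a t.2.2) = ℓ then (1 : ℝ) else 0) Finset.univ i
      rw [Fintype.piFinset_univ] at this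
      unfold stepA
      rw [this, nsmul_eq_mul]
      congr 1
      simp
      ring
    simp_rw [this]
    simp
  have hcard : (Nat.card (Sample n) : ℝ) = ((n : ℝ) ^ 3) ^ (n - 1) * (n : ℝ) ^ 3 := by
    rw [← pow_succ, Nat.sub_add_cancel hn]
    simp [Sample]
    ring
  unfold stepE gammaV
  simp only []
  rw [key, hcard, aux_triple, hs]
  simp_rw [ha]
  field_simp
  ring
end

section
/- Let c̄ be a k-cd for n nodes (n ≥ 1) with M(c̄) = {m} for some m ∈ [k], and let j ∈ [k] ∖ {m}. Then the expected change of the gap in one step of the 3-majority dynamics satisfies E[C_{m,t+1} − C_{j,t+1} | C_t = c̄] ≥ s(c̄)·(1 + γ(c̄)) + c_m·α(c̄). -/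
open Finset

lemma sum_coord {ι β : Type*} [Fintype ι] [DecidableEq ι] [Fintype β] (i : ι) (g : β → ℝ) :
    (∑ S : ι → β, g (S i)) * (Fintype.card β : ℝ) = (Fintype.card (ι → β) : ℝ) * ∑ t, g t := by
  have h1 : (∑ S : ι → β, g (S i)) = ∑ p : β × ({x // x ≠ i} → β), g p.1 :=
    Fintype.sum_equiv (Equiv.funSplitAt i β) _ _ (fun S => by simp [Equiv.funSplitAt])
  rw [h1, Fintype.card_congr (Equiv.funSplitAt i β), Fintype.card_prod, Fintype.sum_prod_type]
  simp only [Finset.sum_const, Finset.card_univ, nsmul_eq_mul, ← Finset.mul_sum]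
  push_cast
  ring

lemma cnt_real {n k : ℕ} (a : Fin n → Fin k) (h : Fin k) :
    (cnt a h : ℝ) = ∑ i, (if a i = h then (1:ℝ) else 0) := by
  simp [cnt]

lemma sum_pair {n k : ℕ} (a : Fin n → Fin k) :
    ∑ y : Fin n, ∑ z : Fin n, (if a y = a z then (1:ℝ) else 0) = ∑ h, (cnt a h : ℝ)^2 := by
  have h1 : ∀ y z : Fin n, (if a y = a z then (1:ℝ) else 0)
      = ∑ h, (if a y = h then (1:ℝ) else 0) * (if a z = h then (1:ℝ) else 0) := by
    intro y z
    simp [eq_comm]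
  simp only [h1]
  have h2 : ∀ y, ∑ z : Fin n, ∑ h, (if a y = h then (1:ℝ) else 0) * (if a z = h then (1:ℝ) else 0)
      = ∑ h, (if a y = h then (1:ℝ) else 0) * cnt a h := by
    intro y
    rw [Finset.sum_comm]
    simp only [← Finset.mul_sum, cnt_real]
  simp only [h2]
  rw [Finset.sum_comm]
  simp only [← Finset.sum_mul, ← cnt_real, sq]

lemma sum_gen {n : ℕ} (g : Fin n → ℝ) (e : Fin n → Fin n → ℝ) :
    ∑ x, ∑ y, ∑ z, (g y * g z + g x * (1 - e y z))
      = n * (∑ x, g x)^2 + (∑ x, g x) * ((n:ℝ)^2 - ∑ y, ∑ z, e y z) := by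
  simp only [Finset.sum_add_distrib, ← Finset.mul_sum, ← Finset.sum_mul, Finset.sum_sub_distrib,
    Finset.sum_const, Finset.card_univ, Fintype.card_fin, nsmul_eq_mul]
  ring

lemma sum_maj {n k : ℕ} (a : Fin n → Fin k) (h : Fin k) :
    ∑ t : Fin n × Fin n × Fin n, (if maj3 (a t.1) (a t.2.1) (a t.2.2) = h then (1:ℝ) else 0)
      = n * (cnt a h : ℝ)^2 + cnt a h * ((n:ℝ)^2 - ∑ h, (cnt a h : ℝ)^2) := by
  have h1 : ∀ x y z : Fin n, (if maj3 (a x) (a y) (a z) = h then (1:ℝ) else 0)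
      = (if a y = h then (1:ℝ) else 0) * (if a z = h then (1:ℝ) else 0)
        + (if a x = h then (1:ℝ) else 0) * (1 - (if a y = a z then (1:ℝ) else 0)) := by
    intro x y z
    unfold maj3
    by_cases e : a y = a z
    · simp [e]
    · by_cases e1 : a y = h
      · have : a z ≠ h := fun e2 => e (e1.trans e2.symm)
        simp [e, this]
      · simp [e, e1]
  simp only [Fintype.sum_prod_type, h1]
  rw [sum_gen (fun x => if a x = h then (1:ℝ) else 0) (fun y z => if a y = a z then (1:ℝ) else 0),
    sum_pair, ← cnt_real]

lemma stepE_gap {n k : ℕ} (hn : 1 ≤ n) (a : Fin n → Fin k) (m j : Fin k) :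
    stepE a (fun b => (cnt b m : ℝ) - (cnt b j : ℝ)) * (n:ℝ)^2 =
      (n * (cnt a m : ℝ)^2 + cnt a m * ((n:ℝ)^2 - ∑ h, (cnt a h : ℝ)^2))
      - (n * (cnt a j : ℝ)^2 + cnt a j * ((n:ℝ)^2 - ∑ h, (cnt a h : ℝ)^2)) := by
  have hn0 : (n:ℝ) ≠ 0 := by positivity
  have : Nonempty (Fin n) := ⟨⟨0, hn⟩⟩
  have hC : (Fintype.card (Sample n) : ℝ) ≠ 0 := by
    exact_mod_cast Fintype.card_ne_zero
  rw [← sum_maj, ← sum_maj]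
  have key : ∀ h : Fin k, (∑ S : Sample n, (cnt (stepA a S) h : ℝ)) * (n:ℝ)^2 =
      (Fintype.card (Sample n) : ℝ) * ∑ t : Fin n × Fin n × Fin n,
        (if maj3 (a t.1) (a t.2.1) (a t.2.2) = h then (1:ℝ) else 0) := by
    intro h
    simp only [cnt_real, stepA]
    rw [Finset.sum_comm]
    have h3 := fun i : Fin n => sum_coord i (fun t : Fin n × Fin n × Fin n =>
        (if maj3 (a t.1) (a t.2.1) (a t.2.2) = h then (1:ℝ) else 0))
    have h4 := Finset.sum_congr (rfl : (Finset.univ : Finset (Fin n)) = _) (fun i _ => h3 i)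
    rw [← Finset.sum_mul] at h4
    simp only [Finset.sum_const, Finset.card_univ, Fintype.card_fin, nsmul_eq_mul,
      Fintype.card_prod] at h4
    push_cast at h4
    apply mul_left_cancel₀ hn0
    refine Eq.trans ?_ h4
    have h5 : ∀ A : ℝ, (n:ℝ) * (A * (n:ℝ)^2) = A * ((n:ℝ) * ((n:ℝ) * (n:ℝ))) := by
      intro A
      ring
    exact h5 _
  unfold stepE
  rw [Nat.card_eq_fintype_card, Finset.sum_sub_distrib, div_mul_eq_mul_div, sub_mul, key, key,
    ← mul_sub, mul_div_cancel_left₀ _ hC]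

/-- If `M(c̄) = {m}` and `j ≠ m`, the expected gap after one step satisfies
`E[C_{m,t+1} − C_{j,t+1} | C_t = c̄] ≥ s(c̄)·(1 + γ(c̄)) + c_m·α(c̄)`. -/
theorem expected_gap_ge (n k : ℕ) (hn : 1 ≤ n) (c : Fin k → ℕ) (hc : ∑ h, c h = n)
    (a : Fin n → Fin k) (ha : ∀ h, cnt a h = c h) (m : Fin k) (hM : Mset c = {m})
    (j : Fin k) (hj : j ≠ m) :
    stepE a (fun b => (cnt b m : ℝ) - (cnt b j : ℝ)) ≥
      (sval c : ℝ) * (1 + gammaV n c) + (c m : ℝ) * alphaV n c := by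
  have hn0 : (0:ℝ) < n := by exact_mod_cast hn
  have hE := stepE_gap hn a m j
  simp only [ha] at hE
  have hm : c m = mval c := by
    have : m ∈ Mset c := by rw [hM]; simp
    simpa [Mset] using this
  have hs : sval c = mval c - (Finset.univ \ {m}).sup c := by
    simp [sval, hM]
  obtain ⟨d, hd⟩ : ∃ d, d = (Finset.univ \ {m}).sup c := ⟨_, rfl⟩
  rw [← hd] at hs
  have hjd : c j ≤ d := by
    rw [hd]; exact Finset.le_sup (f := c) (by simp [hj])
  have hdm : d ≤ c m := by
    rw [hd, hm]; exact Finset.sup_mono (Finset.subset_univ _)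
  have hs' : (sval c : ℝ) = c m - d := by
    rw [hs, ← hm, Nat.cast_sub hdm]
  have hcr : ∑ h, (c h : ℝ) = n := by exact_mod_cast hc
  have hQ : ∑ h, (c h : ℝ)^2 ≤ (n:ℝ)^2 := by
    rw [← hcr]
    exact Finset.sum_sq_le_sq_sum_of_nonneg (fun i _ => by positivity)
  have hjd' : (c j : ℝ) ≤ d := by exact_mod_cast hjd
  have hdm' : (d : ℝ) ≤ c m := by exact_mod_cast hdm
  have hj0 : (0:ℝ) ≤ c j := by positivity
  unfold gammaV alphaV
  rw [hs', ← hm]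
  generalize stepE a (fun b => (cnt b m : ℝ) - (cnt b j : ℝ)) = E at hE ⊢
  generalize ∑ h, (c h : ℝ)^2 = Q at *
  generalize (c m : ℝ) = x at *
  generalize (c j : ℝ) = y at *
  generalize (d : ℝ) = z at *
  generalize (n : ℝ) = N at *
  apply le_of_mul_le_mul_right _ (by positivity : 0 < N^2)
  rw [hE]
  have e : ((x - z) * (1 + ((N * x - Q) / N ^ 2 - (N - x) * (x - z) / N ^ 2)) +
      x * ((N - x) * (x - z) / N ^ 2)) * N^2
      = (x - z) * (N^2 + N * x - Q + (N - x) * z) := by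
    field_simp
    ring
  rw [e]
  have p1 : 0 ≤ (z - y) * (N^2 - Q) := mul_nonneg (by linarith) (by linarith)
  have p2 : 0 ≤ N * ((z - y) * (z + y)) :=
    mul_nonneg hn0.le (mul_nonneg (by linarith) (by linarith))
  have p3 : 0 ≤ (x - z) * (x * z) :=
    mul_nonneg (by linarith) (mul_nonneg (by linarith) (by linarith))
  nlinarith [p1, p2, p3]
end
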